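/- arXiv:2603.23982 — 3 statements merged into one kernel-verified Lean document; each statement's English description precedes it below -/
import Mathlib

section
/- Let S, S' be right groups, E := E(S), E' := E(S'). For i = 1, 2, let ε_i: E → E' be a map, e_i ∈ E, and ψ_i: Se_i → S'ε_i(e_i) a group morphism, and let φ_i: S → S' be the semigroup morphism defined by φ_i(s) = ψ_i(s·e_i)·ε_i(π_E(s)). Then φ₁ = φ₂ if and only if ε₁ = ε₂ and r_{ε₂(e₂)} ∘ ψ₁ = ψ₂ ∘ r_{e₂}, where r_{e₂}: Se₁ → Se₂ is right multiplication by e₂ and r_{ε₂(e₂)}: S'ε₁(e₁) → S'ε₂(e₂) is right multiplication by ε₂(e₂). -/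
/-!
In a left cancellative semigroup every idempotent is a left identity. Hence a map `φ` induced by
`(ε, e, ψ)` restricts to `ε` on idempotents, so `φ` determines `ε`, while its values on `Se` are
those of `ψ`. Conversely, `s * e₁ * e₂ = s * e₂` gives `ψ₂ (s * e₂) = ψ₁ (s * e₁) * ε(e₂)`, and the
factor `ε(e₂)` is absorbed by the left identity property when multiplied by `ε(π_E(s))`.
-/

/-- The set `E(S)` of idempotents of `S`, as a type. -/
abbrev Idempotents (S : Type*) [Mul S] : Type _ := {x : S // IsIdempotentElem x}

section Semigroup

variable {S : Type*} [Semigroup S]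

/-- For an idempotent `e`, the left ideal `Se`. It is encoded as the set of elements having `e` as
a right identity, which is a subsemigroup for every `e`. -/
def leftIdeal (e : S) : Subsemigroup S where
  carrier := {x | x * e = x}
  mul_mem' {x y} _ hy := (mul_assoc x y e).trans (congrArg (x * ·) hy)

variable [IsLeftCancelMul S]

lemma idempotent_mul (e : Idempotents S) (x : S) : (e : S) * x = x :=
  mul_left_cancel (a := (e : S)) (by rw [← mul_assoc, e.2.eq])

lemma isIdempotentElem_of_mul_eq_left {s f : S} (h : s * f = s) : IsIdempotentElem f :=
  mul_left_cancel (a := s) (by rw [← mul_assoc, h, h])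

/-- Right multiplication by the idempotent `e`, as a morphism `S → Se`. Its restriction to `Sf` is
the map `r_e : Sf → Se` between left ideals. -/
def rightMulHom (e : Idempotents S) : S →ₙ* leftIdeal (e : S) where
  toFun x := ⟨x * e, (mul_assoc x e e).trans (congrArg (x * ·) e.2)⟩
  map_mul' x y := Subtype.ext <|
    show x * y * e = x * e * (y * e) by rw [mul_assoc x e, idempotent_mul, mul_assoc]

lemma coe_rightMulHom (e : Idempotents S) (x : S) : (rightMulHom e x : S) = x * e :=
  rfl

lemma rightMulHom_mul_idempotent (e f : Idempotents S) (x : S) :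
    rightMulHom e (x * f) = rightMulHom e x :=
  Subtype.ext <| by rw [coe_rightMulHom, coe_rightMulHom, mul_assoc, idempotent_mul]

lemma rightMulHom_coe {e : Idempotents S} (x : leftIdeal (e : S)) : rightMulHom e x = x :=
  Subtype.ext x.2

end Semigroup

/-- The data `(ε, e, ψ)` used to describe a morphism of right groups `S → S'`: a map `ε` between
the sets of idempotents, a base idempotent `e`, and a morphism `ψ : Se → S'ε(e)`. -/
structure MorphismTriplet (S S' : Type*) [Semigroup S] [Semigroup S'] where
  ε : Idempotents S → Idempotents S'
  e : Idempotents S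
  ψ : leftIdeal (e : S) →ₙ* leftIdeal (ε e : S')

namespace MorphismTriplet

variable {S S' : Type*} [Semigroup S] [Semigroup S'] [IsLeftCancelMul S]

/-- `φ` is the map `s ↦ ψ(s * e) * ε(π_E(s))`. The idempotent `π_E(s)` enters through its
characterization, as an idempotent `f` with `s * f = s`. -/
def Induces (T : MorphismTriplet S S') (φ : S → S') : Prop :=
  ∀ (s : S) (f : Idempotents S), s * f = s → φ s = T.ψ (rightMulHom T.e s) * T.ε f

variable {T : MorphismTriplet S S'} {φ : S → S'}

lemma Induces.apply_mul_idempotent (h : T.Induces φ) (s : S) (f : Idempotents S) :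
    φ (s * f) = T.ψ (rightMulHom T.e s) * T.ε f := by
  rw [h (s * f) f (by rw [mul_assoc, f.2.eq]), rightMulHom_mul_idempotent]

lemma Induces.apply_mul_base (h : T.Induces φ) (s : S) :
    φ (s * T.e) = T.ψ (rightMulHom T.e s) :=
  (h.apply_mul_idempotent s T.e).trans (T.ψ (rightMulHom T.e s)).2

lemma Induces.apply_idempotent [IsLeftCancelMul S'] (h : T.Induces φ) (f : Idempotents S) :
    φ f = T.ε f := by
  have hψf : IsIdempotentElem (T.ψ (rightMulHom T.e f) : S') :=
    ((f.2.map (rightMulHom T.e)).map T.ψ).map (MulMemClass.subtype _)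
  rw [h f f f.2, idempotent_mul ⟨_, hψf⟩]

variable {T₁ T₂ : MorphismTriplet S S'} {φ₁ φ₂ : S → S'}

lemma Induces.ε_eq [IsLeftCancelMul S'] (h₁ : T₁.Induces φ) (h₂ : T₂.Induces φ) :
    T₁.ε = T₂.ε :=
  funext fun f => Subtype.ext <| (h₁.apply_idempotent f).symm.trans (h₂.apply_idempotent f)

lemma Induces.ψ_mul_ε_base [IsLeftCancelMul S'] (h₁ : T₁.Induces φ) (h₂ : T₂.Induces φ)
    (x : leftIdeal (T₁.e : S)) :
    (T₁.ψ x : S') * T₂.ε T₂.e = T₂.ψ (rightMulHom T₂.e x) := by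
  rw [← h₂.apply_mul_base, h₁.apply_mul_idempotent, rightMulHom_coe, congrFun (h₁.ε_eq h₂) T₂.e]

lemma Induces.eq_of_ψ_mul_ε_base [IsLeftCancelMul S'] (hS : ∀ s : S, ∃ f, s * f = s)
    (h₁ : T₁.Induces φ₁) (h₂ : T₂.Induces φ₂) (hε : T₁.ε = T₂.ε)
    (hψ : ∀ x : leftIdeal (T₁.e : S),
      (T₁.ψ x : S') * T₂.ε T₂.e = T₂.ψ (rightMulHom T₂.e x)) :
    φ₁ = φ₂ := by
  funext s
  obtain ⟨f, hsf⟩ := hS s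
  let π : Idempotents S := ⟨f, isIdempotentElem_of_mul_eq_left hsf⟩
  have hψs : (T₂.ψ (rightMulHom T₂.e s) : S') =
      T₁.ψ (rightMulHom T₁.e s) * T₂.ε T₂.e := by
    rw [hψ, coe_rightMulHom, rightMulHom_mul_idempotent]
  calc φ₁ s = T₁.ψ (rightMulHom T₁.e s) * T₂.ε π := by rw [h₁ s π hsf, congrFun hε π]
    _ = T₁.ψ (rightMulHom T₁.e s) * T₂.ε T₂.e * T₂.ε π := by rw [mul_assoc, idempotent_mul]
    _ = φ₂ s := by rw [← hψs, h₂ s π hsf]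

end MorphismTriplet

theorem stmt_11_general {S S' : Type*} [Semigroup S] [IsLeftCancelMul S] [Semigroup S']
    [IsLeftCancelMul S'] (hS : ∀ s : S, ∃ f, s * f = s) {T₁ T₂ : MorphismTriplet S S'}
    {φ₁ φ₂ : S → S'} (h₁ : T₁.Induces φ₁) (h₂ : T₂.Induces φ₂) :
    φ₁ = φ₂ ↔ T₁.ε = T₂.ε ∧ ∀ x : leftIdeal (T₁.e : S),
      (T₁.ψ x : S') * T₂.ε T₂.e = T₂.ψ (rightMulHom T₂.e x) := by
  constructor
  · rintro rfl
    exact ⟨h₁.ε_eq h₂, h₁.ψ_mul_ε_base h₂⟩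
  · rintro ⟨hε, hψ⟩
    exact h₁.eq_of_ψ_mul_ε_base hS h₂ hε hψ

/-- Proposition 3.4 (c): for right groups `S, S'`, two triplets `(ε₁, e₁, ψ₁)` and
`(ε₂, e₂, ψ₂)` correspond to the same semigroup morphism `φᵢ(s) = ψᵢ(s·eᵢ)·εᵢ(π_E(s))`
if and only if `ε₁ = ε₂` and `r_{ε₂(e₂)} ∘ ψ₁ = ψ₂ ∘ r_{e₂}`.
Here `Seᵢ` is identified with `{x | x·eᵢ = x}`. -/
theorem stmt_11 (S S' : Type*) [Semigroup S] [Semigroup S']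
    (hne : Nonempty S) (hrs : ∀ a b : S, ∃ x : S, a * x = b)
    (hlc : ∀ a b c : S, a * b = a * c → b = c)
    (hne' : Nonempty S') (hrs' : ∀ a b : S', ∃ x : S', a * x = b)
    (hlc' : ∀ a b c : S', a * b = a * c → b = c)
    (ε₁ ε₂ : {x : S // x * x = x} → {y : S' // y * y = y})
    (e₁ e₂ : {x : S // x * x = x})
    (ψ₁ : {x : S // x * e₁.1 = x} → S') (ψ₂ : {x : S // x * e₂.1 = x} → S')
    -- the ψᵢ are group morphisms Seᵢ → S'·εᵢ(eᵢ)
    (hψ₁mul : ∀ x y : {x : S // x * e₁.1 = x},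
      ψ₁ ⟨x.1 * y.1, by rw [mul_assoc, y.2]⟩ = ψ₁ x * ψ₁ y)
    (hψ₁into : ∀ x : {x : S // x * e₁.1 = x}, ψ₁ x * (ε₁ e₁ : S') = ψ₁ x)
    (hψ₂mul : ∀ x y : {x : S // x * e₂.1 = x},
      ψ₂ ⟨x.1 * y.1, by rw [mul_assoc, y.2]⟩ = ψ₂ x * ψ₂ y)
    (hψ₂into : ∀ x : {x : S // x * e₂.1 = x}, ψ₂ x * (ε₂ e₂ : S') = ψ₂ x)
    -- φᵢ is the semigroup morphism determined by the triplet (εᵢ, eᵢ, ψᵢ)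
    (φ₁ φ₂ : S → S')
    (hφ₁ : ∀ (s f : S) (hf : f * f = f), s * f = s →
      φ₁ s = ψ₁ ⟨s * e₁.1, by rw [mul_assoc, e₁.2]⟩ * (ε₁ ⟨f, hf⟩ : S'))
    (hφ₂ : ∀ (s f : S) (hf : f * f = f), s * f = s →
      φ₂ s = ψ₂ ⟨s * e₂.1, by rw [mul_assoc, e₂.2]⟩ * (ε₂ ⟨f, hf⟩ : S')) :
    φ₁ = φ₂ ↔
      (ε₁ = ε₂ ∧
        ∀ x : {x : S // x * e₁.1 = x},
          ψ₁ x * (ε₂ e₂ : S') = ψ₂ ⟨x.1 * e₂.1, by rw [mul_assoc, e₂.2]⟩) := by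
  have : IsLeftCancelMul S := ⟨fun a b c => hlc a b c⟩
  have : IsLeftCancelMul S' := ⟨fun a b c => hlc' a b c⟩
  let T₁ : MorphismTriplet S S' :=
    ⟨ε₁, e₁, ⟨fun x => ⟨ψ₁ x, hψ₁into x⟩, fun x y => Subtype.ext (hψ₁mul x y)⟩⟩
  let T₂ : MorphismTriplet S S' :=
    ⟨ε₂, e₂, ⟨fun x => ⟨ψ₂ x, hψ₂into x⟩, fun x y => Subtype.ext (hψ₂mul x y)⟩⟩
  have h₁ : T₁.Induces φ₁ := fun s f => hφ₁ s f f.2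
  have h₂ : T₂.Induces φ₂ := fun s f => hφ₂ s f f.2
  exact stmt_11_general (fun s => hrs s s) h₁ h₂
end

section
/- Let S be a right group and e, f ∈ E(S). Then there exists a semigroup automorphism α of S with α(e) = f; that is, the pointed right groups (S, e) and (S, f) are isomorphic. -/
/-!
In a left cancellative semigroup every idempotent is a left identity, and an element `x` has at most
one right identity, which is necessarily idempotent. Replacing the right identity of each `x` that
has one by another idempotent, according to a permutation `σ` of the idempotents, amounts to
`x = x * g ↦ x * σ g`. This map commutes with left multiplications, and the change is invisible
after a further right multiplication; hence it is an automorphism, and it extends `σ`.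
-/

section LeftCancel

variable {S : Type*} [Semigroup S] [IsLeftCancelMul S] {g x y : S}

theorem mul_eq_right_of_isIdempotentElem (hg : IsIdempotentElem g) (x : S) : g * x = x :=
  mul_left_cancel (a := g) (by rw [← mul_assoc, hg.eq])

theorem isIdempotentElem_of_mul_eq_left_s13 (h : x * g = x) : IsIdempotentElem g :=
  mul_left_cancel (a := x) (by rw [← mul_assoc, h, h])

theorem mul_mul_eq_mul_iff_mul_eq_left : x * y * g = x * y ↔ y * g = y := by
  rw [mul_assoc, mul_right_inj]

open Classical in
/-- The action of a permutation `σ` of the idempotents on a left cancellative semigroup: it sends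
`x` to `x * σ g` where `g` is the right identity of `x`, and fixes `x` if there is none. -/
noncomputable def idempotentTwist (σ : Equiv.Perm {g : S // IsIdempotentElem g}) (x : S) : S :=
  if h : ∃ g, x * g = x then x * σ ⟨h.choose, isIdempotentElem_of_mul_eq_left_s13 h.choose_spec⟩ else x

namespace idempotentTwist

variable (σ : Equiv.Perm {g : S // IsIdempotentElem g})

theorem apply_of_mul_eq_left {g : {g : S // IsIdempotentElem g}} (h : x * g = x) :
    idempotentTwist σ x = x * σ g := by
  have hex : ∃ k, x * k = x := ⟨g, h⟩
  have choose_eq : hex.choose = g := mul_left_cancel (hex.choose_spec.trans h.symm)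
  simp only [idempotentTwist, dif_pos hex, choose_eq, Subtype.coe_eta]

theorem apply_of_not_exists (h : ¬∃ g, x * g = x) : idempotentTwist σ x = x :=
  dif_neg h

theorem apply_coe (g : {g : S // IsIdempotentElem g}) : idempotentTwist σ (g : S) = σ g := by
  rw [apply_of_mul_eq_left σ g.2, mul_eq_right_of_isIdempotentElem g.2]

theorem apply_mul (x y : S) : idempotentTwist σ (x * y) = x * idempotentTwist σ y := by
  by_cases hy : ∃ g, y * g = y
  · obtain ⟨g, hg⟩ := hy
    lift g to {g : S // IsIdempotentElem g} using isIdempotentElem_of_mul_eq_left_s13 hg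
    rw [apply_of_mul_eq_left σ hg,
      apply_of_mul_eq_left σ (mul_mul_eq_mul_iff_mul_eq_left.mpr hg), mul_assoc]
  · have hxy : ¬∃ g, x * y * g = x * y := by simpa only [mul_mul_eq_mul_iff_mul_eq_left] using hy
    rw [apply_of_not_exists σ hy, apply_of_not_exists σ hxy]

theorem apply_mul_eq_mul (x y : S) : idempotentTwist σ x * y = x * y := by
  by_cases hx : ∃ g, x * g = x
  · obtain ⟨g, hg⟩ := hx
    lift g to {g : S // IsIdempotentElem g} using isIdempotentElem_of_mul_eq_left_s13 hg
    rw [apply_of_mul_eq_left σ hg, mul_assoc, mul_eq_right_of_isIdempotentElem (σ g).2]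
  · rw [apply_of_not_exists σ hx]

theorem symm_apply_apply (x : S) : idempotentTwist σ.symm (idempotentTwist σ x) = x := by
  by_cases hx : ∃ g, x * g = x
  · obtain ⟨g, hg⟩ := hx
    lift g to {g : S // IsIdempotentElem g} using isIdempotentElem_of_mul_eq_left_s13 hg
    rw [apply_of_mul_eq_left σ hg, apply_mul, apply_coe, Equiv.symm_apply_apply, hg]
  · rw [apply_of_not_exists σ hx, apply_of_not_exists σ.symm hx]

end idempotentTwist

theorem exists_mulEquiv_extending_perm_idempotents
    (σ : Equiv.Perm {g : S // IsIdempotentElem g}) :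
    ∃ α : S ≃* S, ∀ g : {g : S // IsIdempotentElem g}, α g = σ g :=
  ⟨{ toFun := idempotentTwist σ
     invFun := idempotentTwist σ.symm
     left_inv := idempotentTwist.symm_apply_apply σ
     right_inv := idempotentTwist.symm_apply_apply σ.symm
     map_mul' x y := by rw [idempotentTwist.apply_mul, idempotentTwist.apply_mul_eq_mul] },
    idempotentTwist.apply_coe σ⟩

theorem stmt_13_general {e f : S} (he : IsIdempotentElem e) (hf : IsIdempotentElem f) :
    ∃ α : S ≃* S, α e = f := by
  classical
  obtain ⟨α, hα⟩ := exists_mulEquiv_extending_perm_idempotents (Equiv.swap ⟨e, he⟩ ⟨f, hf⟩)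
  exact ⟨α, by rw [hα ⟨e, he⟩, Equiv.swap_apply_left]⟩

end LeftCancel

/-- For a right group `S` and idempotents `e, f ∈ E(S)`, there is a semigroup
automorphism `α` of `S` with `α(e) = f`; that is, the pointed right groups `(S, e)` and
`(S, f)` are isomorphic. -/
theorem stmt_13 (S : Type*) [Semigroup S] [Nonempty S]
    (hrs : ∀ a b : S, ∃ x : S, a * x = b)
    (hlc : ∀ a b c : S, a * b = a * c → b = c)
    (e f : S) (he : e * e = e) (hf : f * f = f) :
    ∃ α : S ≃* S, α e = f := by
  have : IsLeftCancelMul S := ⟨fun a b c => hlc a b c⟩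
  exact stmt_13_general he hf
end

section
/- Let f: S → S' be a semigroup morphism between right groups and E := E(S). Call a semigroup morphism between right groups trivial if its image is a singleton (consisting of an idempotent). Then f has a Z-prekernel in the category of right groups — i.e., there exist a right group L and a semigroup morphism j: L → S such that f ∘ j is trivial and, for every right group Y and every semigroup morphism λ: Y → S with f ∘ λ trivial, there is a unique semigroup morphism λ': Y → L with λ = j ∘ λ' — if and only if f(E) is a singleton. Moreover, if f(E) = {g₀}, then K := f⁻¹({g₀}) is a subsemigroup of S that is itself a right group, and the inclusion K → S is a Z-prekernel of f. -/
/-- A nonempty, right simple, left cancellative semigroup, i.e., a right group. -/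
def IsRightGroup (S : Type*) [Semigroup S] : Prop :=
  Nonempty S ∧ (∀ a b : S, ∃ x : S, a * x = b) ∧ ∀ a b c : S, a * b = a * c → b = c

/-- A semigroup morphism between right groups is trivial if its image is a singleton
(consisting of an idempotent). -/
def IsTrivialHom {S T : Type*} [Semigroup S] [Semigroup T] (f : S →ₙ* T) : Prop :=
  ∃ t : T, t * t = t ∧ ∀ s : S, f s = t

/-- `j : L → S` is a Z-prekernel of `f : S → S'` in the category of right groups:
`f ∘ j` is trivial, and every morphism `λ : Y → S` from a right group `Y` with `f ∘ λ`
trivial factors uniquely through `j`. -/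
def IsZPrekernel {L S S' : Type} [Semigroup L] [Semigroup S] [Semigroup S']
    (f : S →ₙ* S') (j : L →ₙ* S) : Prop :=
  IsTrivialHom (f.comp j) ∧
    ∀ (Y : Type) [Semigroup Y], IsRightGroup Y → ∀ lam : Y →ₙ* S,
      IsTrivialHom (f.comp lam) → ∃! lam' : Y →ₙ* L, lam = j.comp lam'

/-!
The map `f` sends a left identity of `S` to `g₀`, so `g₀ * f x = f x` for all `x`. Hence `f a = g₀`
and `f (a * x) = g₀` force `f x = g₀`, and the fibre over `g₀` inherits the solvability of
`a * x = b` from `S`. A morphism from a right group whose composite with `f` is trivial sends every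
element into this fibre, since it maps idempotents to idempotents and `f` maps those to `g₀`.
Conversely, an idempotent of `S` is a morphism from the one-element right group, and factoring it
through a prekernel `j` shows that `f` sends it to the constant value of `f ∘ j`.
-/

theorem IsRightGroup.of_subsingleton {S : Type*} [Semigroup S] [Nonempty S] [Subsingleton S] :
    IsRightGroup S :=
  ⟨‹_›, fun a _ => ⟨a, Subsingleton.elim _ _⟩, fun _ _ _ _ => Subsingleton.elim _ _⟩

section RightGroup

variable {S : Type*} [Semigroup S]

theorem IsRightGroup.exists_isIdempotentElem (hS : IsRightGroup S) :
    ∃ e : S, IsIdempotentElem e := by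
  obtain ⟨⟨a⟩, hdiv, hcancel⟩ := hS
  obtain ⟨e, hae⟩ := hdiv a a
  exact ⟨e, hcancel a _ _ (by rw [← mul_assoc, hae, hae])⟩

theorem IsRightGroup.mul_eq_right_of_isIdempotentElem (hS : IsRightGroup S) {e : S}
    (he : IsIdempotentElem e) (a : S) : e * a = a :=
  hS.2.2 e _ _ (by rw [← mul_assoc, he.eq])

theorem IsRightGroup.subsemigroup_of_mem_of_mul_mem (hS : IsRightGroup S) (K : Subsemigroup S)
    (hne : (K : Set S).Nonempty) (hK : ∀ a x : S, a ∈ K → a * x ∈ K → x ∈ K) :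
    IsRightGroup K := by
  refine ⟨hne.to_subtype, fun a b => ?_, fun a b c h => ?_⟩
  · obtain ⟨x, hx⟩ := hS.2.1 (a : S) b
    exact ⟨⟨x, hK a x a.2 (hx ▸ b.2)⟩, Subtype.ext hx⟩
  · exact Subtype.ext (hS.2.2 a b c (congrArg Subtype.val h))

end RightGroup

section Fiber

variable {S T : Type*} [Semigroup S] [Semigroup T] (f : S →ₙ* T) {g : T}

/-- The fibre `f⁻¹({g})` over an idempotent `g`, as a subsemigroup; this is the semigroup `K` of the
theorem. -/
def idempotentFiber (hg : IsIdempotentElem g) : Subsemigroup S where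
  carrier := {s | f s = g}
  mul_mem' {a b} (ha : f a = g) (hb : f b = g) := show f (a * b) = g by
    rw [map_mul, ha, hb, hg.eq]

variable {f}

theorem isRightGroup_idempotentFiber (hS : IsRightGroup S) (hg : IsIdempotentElem g)
    (hf : ∀ e : S, IsIdempotentElem e → f e = g) : IsRightGroup (idempotentFiber f hg) := by
  obtain ⟨e, he⟩ := hS.exists_isIdempotentElem
  refine hS.subsemigroup_of_mem_of_mul_mem _ ⟨e, hf e he⟩
    fun a x (ha : f a = g) (hax : f (a * x) = g) => ?_
  calc
    f x = f e * f x := by rw [← map_mul, hS.mul_eq_right_of_isIdempotentElem he]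
    _ = f a * f x := by rw [hf e he, ha]
    _ = g := by rw [← map_mul, hax]

theorem IsTrivialHom.comp_apply_eq {Y : Type*} [Semigroup Y] (hY : IsRightGroup Y)
    {lam : Y →ₙ* S} (hlam : IsTrivialHom (f.comp lam))
    (hf : ∀ e : S, IsIdempotentElem e → f e = g) (y : Y) : f (lam y) = g := by
  obtain ⟨t, -, ht⟩ := hlam
  obtain ⟨u, hu⟩ := hY.exists_isIdempotentElem
  calc
    f (lam y) = t := ht y
    _ = f (lam u) := (ht u).symm
    _ = g := hf _ (hu.map lam)

end Fiber

section Prekernel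

variable {S S' : Type} [Semigroup S] [Semigroup S'] {f : S →ₙ* S'}

theorem isZPrekernel_subtype_idempotentFiber {g : S'} (hg : IsIdempotentElem g)
    (hf : ∀ e : S, IsIdempotentElem e → f e = g) :
    IsZPrekernel f (MulMemClass.subtype (idempotentFiber f hg)) := by
  refine ⟨⟨g, hg, fun s => s.2⟩, fun Y _ hY lam hlam => ?_⟩
  refine ⟨lam.codRestrict _ (hlam.comp_apply_eq hY hf), rfl, fun lam' hlam' => ?_⟩
  ext y
  exact (DFunLike.congr_fun hlam' y).symm

theorem IsZPrekernel.exists_apply_eq_of_isIdempotentElem {L : Type} [Semigroup L] {j : L →ₙ* S}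
    (hj : IsZPrekernel f j) {e : S} (he : IsIdempotentElem e) : ∃ l : L, j l = e := by
  let const : Unit →ₙ* S := ⟨fun _ => e, fun _ _ => he.symm⟩
  have const_trivial : IsTrivialHom (f.comp const) := ⟨f e, he.map f, fun _ => rfl⟩
  obtain ⟨lam', hlam', -⟩ := hj.2 Unit .of_subsingleton const const_trivial
  exact ⟨lam' (), (DFunLike.congr_fun hlam' ()).symm⟩

theorem IsZPrekernel.exists_forall_isIdempotentElem_map_eq {L : Type} [Semigroup L] {j : L →ₙ* S}
    (hj : IsZPrekernel f j) : ∃ g : S', ∀ e : S, IsIdempotentElem e → f e = g := by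
  obtain ⟨g, -, hg⟩ := hj.1
  refine ⟨g, fun e he => ?_⟩
  obtain ⟨l, rfl⟩ := hj.exists_apply_eq_of_isIdempotentElem he
  exact hg l

end Prekernel

theorem stmt_17_general {S S' : Type} [Semigroup S] [Semigroup S']
    (hS : IsRightGroup S) (f : S →ₙ* S') :
    ((∃ (L : Type) (_ : Semigroup L), IsRightGroup L ∧
        ∃ j : L →ₙ* S, IsZPrekernel f j) ↔
      ∃ g₀ : S', ∀ e : S, e * e = e → f e = g₀) ∧
    (∀ g₀ : S', (∀ e : S, e * e = e → f e = g₀) →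
      ∃ K : Subsemigroup S, (K : Set S) = {s : S | f s = g₀} ∧
        IsRightGroup K ∧ IsZPrekernel f (MulMemClass.subtype K)) := by
  have fiber_prekernel (g₀ : S') (hf : ∀ e : S, e * e = e → f e = g₀) :
      ∃ K : Subsemigroup S, (K : Set S) = {s : S | f s = g₀} ∧
        IsRightGroup K ∧ IsZPrekernel f (MulMemClass.subtype K) := by
    obtain ⟨e, he⟩ := hS.exists_isIdempotentElem
    have hg₀ : IsIdempotentElem g₀ := hf e he ▸ he.map f
    exact ⟨idempotentFiber f hg₀, rfl, isRightGroup_idempotentFiber hS hg₀ hf,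
      isZPrekernel_subtype_idempotentFiber hg₀ hf⟩
  refine ⟨⟨?_, ?_⟩, fiber_prekernel⟩
  · rintro ⟨L, _, -, j, hj⟩
    exact hj.exists_forall_isIdempotentElem_map_eq
  · rintro ⟨g₀, hf⟩
    obtain ⟨K, -, hK, hprekernel⟩ := fiber_prekernel g₀ hf
    exact ⟨K, inferInstance, hK, _, hprekernel⟩

/-- Lemma: a semigroup morphism `f : S → S'` between right groups has a Z-prekernel in
the category of right groups if and only if `f(E(S))` is a singleton. Moreover, if
`f(E(S)) = {g₀}`, then `K := f⁻¹({g₀})` is a subsemigroup of `S` which is itself a right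
group, and the inclusion `K → S` is a Z-prekernel of `f`. -/
theorem stmt_17 {S S' : Type} [Semigroup S] [Semigroup S']
    (hS : IsRightGroup S) (hS' : IsRightGroup S') (f : S →ₙ* S') :
    ((∃ (L : Type) (_ : Semigroup L), IsRightGroup L ∧
        ∃ j : L →ₙ* S, IsZPrekernel f j) ↔
      ∃ g₀ : S', ∀ e : S, e * e = e → f e = g₀) ∧
    (∀ g₀ : S', (∀ e : S, e * e = e → f e = g₀) →
      ∃ K : Subsemigroup S, (K : Set S) = {s : S | f s = g₀} ∧
        IsRightGroup K ∧ IsZPrekernel f (MulMemClass.subtype K)) :=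
  stmt_17_general hS f
end
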